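/- Fix an integer $n \ge 1$. Let $\mathrm{Sym}^n(\mathbb{R}^2)$ be the representation of $SL(2,\mathbb{R})$ on the homogeneous polynomials of degree $n$ in two variables $A, B$ (the standard basis of $\mathbb{R}^2$), in which $u_t = \begin{pmatrix}1&t\\0&1\end{pmatrix}$ maps $p(A,B)$ to $p(A,B+tA)$, with the norm $\bigl\|\sum_{i=0}^n b_i A^{n-i}B^i\bigr\| = \max_{0\le i\le n}|b_i|$. There exists a constant $C>0$ depending only on $n$ such that the following holds. Let $\varepsilon,\eta\in(0,1)$, let $c_0,\dots,c_n$ be real numbers with $|c_i|\le\varepsilon$ for all $0\le i\le n$, put $p=\sum_{i=0}^n c_iA^{n-i}B^i$, and set $T=\eta/\max_{1\le i\le n}|c_i|^{1/i}$, with $T=\infty$ if $c_1=\dots=c_n=0$. Then for every real $t$ with $0\le t\le T$ one has $$u_t\, p=\sum_{k=0}^n\Bigl(\sum_{i=k}^n\binom ik c_it^{i-k}\Bigr)A^{n-k}B^k ,$$ and: (a) if $\varepsilon\le\eta$, then $\bigl|\sum_{i=0}^n c_it^i\bigr|\le C\eta$; (b) for every $k$ with $1\le k\le n$, $\bigl|\sum_{i=k}^n\binom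 ik c_it^{i-k}\bigr|\le C\varepsilon^{1/n}$; (c) (without assuming $\varepsilon\le\eta$) $u_t\,p=w+e$ for some $w\in\mathbb{R}\cdot A^n$, which is fixed by $u_s$ for all $s\in\mathbb{R}$, with $\|w\|\le C\eta$, and some $e\in\mathrm{Sym}^n(\mathbb{R}^2)$ with $\|e\|\le C\varepsilon^{1/n}$. -/

import Mathlib

open scoped MatrixGroups ENNReal

noncomputable section

namespace SymRep

/-- The variable `A`, standing for the basis vector `(1,0)` of `ℝ²`. -/
abbrev A : MvPolynomial (Fin 2) ℝ := MvPolynomial.X 0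

/-- The variable `B`, standing for the basis vector `(0,1)` of `ℝ²`. -/
abbrev B : MvPolynomial (Fin 2) ℝ := MvPolynomial.X 1

/-- `Sym^n(ℝ²)`: homogeneous polynomials of degree `n` in the two variables `A`, `B`. -/
abbrev Sym (n : ℕ) : Submodule ℝ (MvPolynomial (Fin 2) ℝ) :=
  MvPolynomial.homogeneousSubmodule (Fin 2) ℝ n

/-- Substitution by a matrix `g`: each basis vector is replaced by its image under `g`, that is
`A ↦ g₀₀ A + g₁₀ B` and `B ↦ g₀₁ A + g₁₁ B`. -/
def subst (g : SL(2, ℝ)) : MvPolynomial (Fin 2) ℝ →ₐ[ℝ] MvPolynomial (Fin 2) ℝ :=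
  MvPolynomial.aeval fun j => ∑ i : Fin 2, g i j • (MvPolynomial.X i : MvPolynomial (Fin 2) ℝ)

theorem subst_one : subst 1 = AlgHom.id ℝ _ := by
  apply MvPolynomial.algHom_ext
  intro j
  fin_cases j <;> simp [subst, Fin.sum_univ_two]

theorem subst_mul (g h : SL(2, ℝ)) : subst (g * h) = (subst g).comp (subst h) := by
  apply MvPolynomial.algHom_ext
  intro j
  simp only [subst, AlgHom.comp_apply, MvPolynomial.aeval_X, Fin.sum_univ_two, map_add, map_smul,
    Matrix.SpecialLinearGroup.coe_mul, Matrix.mul_apply]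
  module

theorem subst_mem {n : ℕ} (g : SL(2, ℝ)) {p : MvPolynomial (Fin 2) ℝ} (hp : p ∈ Sym n) :
    subst g p ∈ Sym n := by
  have h := MvPolynomial.IsHomogeneous.aeval (n := 1) hp
    (fun j => ∑ i : Fin 2, g i j • (MvPolynomial.X i : MvPolynomial (Fin 2) ℝ))
    (fun j => (MvPolynomial.homogeneousSubmodule (Fin 2) ℝ 1).sum_mem fun i _ =>
      Submodule.smul_mem _ _ (MvPolynomial.isHomogeneous_X ℝ i))
  simpa [subst] using h

/-- The representation of `SL(2,ℝ)` on `Sym^n(ℝ²)`. -/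
def rep (n : ℕ) : Representation ℝ SL(2, ℝ) (Sym n) where
  toFun g := (subst g).toLinearMap.restrict fun _ hp => subst_mem g hp
  map_one' := by
    ext1 p
    apply Subtype.ext
    simp [subst_one]
  map_mul' g h := by
    ext1 p
    apply Subtype.ext
    simp [subst_mul]
    rfl

/-- The unipotent element `[[1,t],[0,1]]`. -/
def u (t : ℝ) : SL(2, ℝ) := ⟨!![1, t; 0, 1], by simp [Matrix.det_fin_two]⟩

/-- The basis vector `A^(n-i) B^i` of `Sym^n(ℝ²)`, for `0 ≤ i ≤ n`. -/
def basisVec (n : ℕ) (i : Fin (n + 1)) : Sym n :=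
  ⟨A ^ (n - i : ℕ) * B ^ (i : ℕ), by
    have h := ((MvPolynomial.isHomogeneous_X ℝ (0 : Fin 2)).pow (n - i : ℕ)).mul
      ((MvPolynomial.isHomogeneous_X ℝ (1 : Fin 2)).pow (i : ℕ))
    have hi : 1 * (n - i : ℕ) + 1 * (i : ℕ) = n := by omega
    rwa [hi] at h⟩

/-- The vector `p(A,B) = ∑ c_i A^(n-i) B^i` of `Sym^n(ℝ²)`. -/
def vec {n : ℕ} (c : Fin (n + 1) → ℝ) : Sym n := ∑ i, c i • basisVec n i

/-- The norm on `Sym^n(ℝ²)`: the largest absolute value of a coefficient of `A^(n-i) B^i`,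
`0 ≤ i ≤ n`. -/
def symNorm {n : ℕ} (p : Sym n) : ℝ :=
  Finset.univ.sup' Finset.univ_nonempty fun i : Fin (n + 1) =>
    |MvPolynomial.coeff (Finsupp.single 0 (n - i : ℕ) + Finsupp.single 1 (i : ℕ)) p.1|

/-- `T = η / max_{1 ≤ i ≤ n} |c_i|^(1/i)`. For `η > 0` this is a positive real number unless
`c_1 = ⋯ = c_n = 0`, in which case it is `∞`. -/
def time {n : ℕ} (η : ℝ) (c : Fin (n + 1) → ℝ) : ℝ≥0∞ :=
  ENNReal.ofReal η /
    Finset.univ.sup fun i : Fin n => ENNReal.ofReal (|c i.succ| ^ (1 / ((i : ℝ) + 1)))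

end SymRep

end

namespace SymRep

theorem rep_u_basisVec (n : ℕ) (t : ℝ) (i : Fin (n + 1)) :
    rep n (u t) (basisVec n i) =
      ∑ k ∈ Finset.Iic i, (((i : ℕ).choose k : ℝ) * t ^ ((i : ℕ) - k)) • basisVec n k := by
  apply Subtype.ext
  have hA : subst (u t) A = A := by
    simp [subst, u, A, Fin.sum_univ_two]
  have hB : subst (u t) B = B + MvPolynomial.C t * A := by
    simp [subst, u, A, B, Fin.sum_univ_two, MvPolynomial.smul_eq_C_mul, add_comm]
  have hsub : ((rep n (u t) (basisVec n i) : Sym n) : MvPolynomial (Fin 2) ℝ) =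
      A ^ (n - i : ℕ) * (B + MvPolynomial.C t * A) ^ (i : ℕ) := by
    change subst (u t) (A ^ (n - i : ℕ) * B ^ (i : ℕ)) = _
    rw [map_mul, map_pow, map_pow, hA, hB]
  rw [hsub, add_pow, Nat.range_succ_eq_Iic, Finset.mul_sum, ← Fin.map_valEmbedding_Iic,
    Finset.sum_map, AddSubmonoidClass.coe_finsetSum]
  refine Finset.sum_congr rfl fun k hk => ?_
  have hki : (k : ℕ) ≤ i := Fin.le_def.mp (Finset.mem_Iic.mp hk)
  have hpow : (n - k : ℕ) = (n - i) + (i - k) := by omega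
  simp only [Fin.valEmbedding_apply, basisVec, Submodule.coe_smul, MvPolynomial.smul_eq_C_mul,
    map_mul, map_pow, map_natCast, hpow, pow_add, mul_pow]
  ring

theorem rep_u_vec {n : ℕ} (t : ℝ) (c : Fin (n + 1) → ℝ) :
    rep n (u t) (vec c) =
      vec fun k => ∑ i ∈ Finset.Ici k, ((i : ℕ).choose k : ℝ) * c i * t ^ ((i : ℕ) - k) := by
  simp only [vec, map_sum, map_smul, rep_u_basisVec, Finset.smul_sum, Finset.sum_smul]
  rw [Finset.sum_comm' (t' := Finset.univ) (s' := fun k => Finset.Ici k) (by simp)]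
  refine Finset.sum_congr rfl fun k _ => Finset.sum_congr rfl fun i _ => ?_
  rw [smul_smul]
  congr 1
  ring

theorem coeff_basisVec (n : ℕ) (i j : Fin (n + 1)) :
    MvPolynomial.coeff (Finsupp.single 0 (n - j : ℕ) + Finsupp.single 1 (j : ℕ))
      (basisVec n i).1 = if i = j then 1 else 0 := by
  have h : (basisVec n i).1 = MvPolynomial.monomial
      (Finsupp.single 0 (n - i : ℕ) + Finsupp.single 1 (i : ℕ)) (1 : ℝ) := by
    simp [basisVec, A, B, MvPolynomial.X_pow_eq_monomial, MvPolynomial.monomial_mul]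
  rw [h, MvPolynomial.coeff_monomial]
  refine if_congr ⟨fun e => ?_, fun e => by rw [e]⟩ rfl rfl
  have := DFunLike.congr_fun e 1
  exact Fin.ext (by simpa using this)

theorem coeff_vec {n : ℕ} (b : Fin (n + 1) → ℝ) (j : Fin (n + 1)) :
    MvPolynomial.coeff (Finsupp.single 0 (n - j : ℕ) + Finsupp.single 1 (j : ℕ))
      (vec b).1 = b j := by
  rw [vec, AddSubmonoidClass.coe_finsetSum, MvPolynomial.coeff_sum]
  simp only [Submodule.coe_smul, MvPolynomial.coeff_smul, coeff_basisVec]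
  simp

theorem symNorm_vec_le {n : ℕ} {b : Fin (n + 1) → ℝ} {M : ℝ} (h : ∀ i, |b i| ≤ M) :
    symNorm (vec b) ≤ M :=
  Finset.sup'_le _ _ fun i _ => by rw [coeff_vec]; exact h i

theorem vec_add {n : ℕ} (a b : Fin (n + 1) → ℝ) : vec (a + b) = vec a + vec b := by
  simp [vec, add_smul, Finset.sum_add_distrib]

theorem vec_single_zero {n : ℕ} (a : ℝ) :
    vec (Pi.single (0 : Fin (n + 1)) a) = a • basisVec n 0 := by
  rw [vec, Finset.sum_eq_single 0 (fun i _ hi => by simp [hi]) (by simp), Pi.single_eq_same]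

theorem rep_u_basisVec_zero (n : ℕ) (s : ℝ) : rep n (u s) (basisVec n 0) = basisVec n 0 := by
  have h : Finset.Iic (0 : Fin (n + 1)) = {0} := by ext; simp
  simp [rep_u_basisVec, h]

theorem root_mul_le_of_le_time {n : ℕ} {η t : ℝ} {c : Fin (n + 1) → ℝ} (hη : 0 ≤ η) (ht : 0 ≤ t)
    (h : ENNReal.ofReal t ≤ time η c) {i : Fin (n + 1)} (hi : i ≠ 0) :
    |c i| ^ (1 / ((i : ℕ) : ℝ)) * t ≤ η := by
  obtain ⟨j, rfl⟩ := Fin.exists_succ_eq.mpr hi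
  have h1 := ENNReal.mul_le_of_le_div h
  have h2 : ENNReal.ofReal (|c j.succ| ^ (1 / ((j : ℝ) + 1))) ≤
      Finset.univ.sup fun i : Fin n => ENNReal.ofReal (|c i.succ| ^ (1 / ((i : ℝ) + 1))) :=
    Finset.le_sup (f := fun i : Fin n => ENNReal.ofReal (|c i.succ| ^ (1 / ((i : ℝ) + 1))))
      (Finset.mem_univ j)
  have h3 := (mul_le_mul_right h2 (ENNReal.ofReal t)).trans h1
  rw [← ENNReal.ofReal_mul ht, ENNReal.ofReal_le_ofReal_iff hη] at h3
  rw [mul_comm]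
  simpa using h3

/-- For `1 ≤ i` and `t` up to the time scale, `|c_i| t^i ≤ η`. -/
theorem abs_mul_pow_le {n : ℕ} {η t : ℝ} {c : Fin (n + 1) → ℝ} (hη : 0 ≤ η) (hη1 : η ≤ 1)
    (ht : 0 ≤ t) (h : ENNReal.ofReal t ≤ time η c) {i : Fin (n + 1)} (hi : i ≠ 0) :
    |c i| * t ^ (i : ℕ) ≤ η := by
  have hi0 : (i : ℕ) ≠ 0 := fun e => hi (Fin.ext e)
  have hr := root_mul_le_of_le_time hη ht h hi
  set r := |c i| ^ (1 / ((i : ℕ) : ℝ)) with hrdef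
  have hr0 : 0 ≤ r := by positivity
  have hri : r ^ (i : ℕ) = |c i| := by
    rw [hrdef, one_div, Real.rpow_inv_natCast_pow (abs_nonneg _) hi0]
  rw [← hri, ← mul_pow]
  exact (pow_le_of_le_one (by positivity) (hr.trans hη1) hi0).trans hr

/-- For `1 ≤ k ≤ i` and `t` up to the time scale, `|c_i| t^(i-k) ≤ ε^(1/n)`. -/
theorem abs_mul_pow_sub_le {n : ℕ} {ε η t : ℝ} {c : Fin (n + 1) → ℝ} (hε : 0 < ε) (hε1 : ε ≤ 1)
    (hη : 0 ≤ η) (hη1 : η ≤ 1) (ht : 0 ≤ t) (h : ENNReal.ofReal t ≤ time η c)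
    {i : Fin (n + 1)} (hc : |c i| ≤ ε) {k : ℕ} (hk : 1 ≤ k) (hki : k ≤ i) :
    |c i| * t ^ ((i : ℕ) - k) ≤ ε ^ (1 / (n : ℝ)) := by
  have hi0 : (i : ℕ) ≠ 0 := by omega
  have hr := root_mul_le_of_le_time hη ht h (i := i) (fun e => hi0 (by simp [e]))
  set r := |c i| ^ (1 / ((i : ℕ) : ℝ)) with hrdef
  have hr0 : 0 ≤ r := by positivity
  have hri : r ^ (i : ℕ) = |c i| := by
    rw [hrdef, one_div, Real.rpow_inv_natCast_pow (abs_nonneg _) hi0]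
  have hipos : (0 : ℝ) < (i : ℕ) := by exact_mod_cast Nat.pos_of_ne_zero hi0
  have hin : ((i : ℕ) : ℝ) ≤ n := by exact_mod_cast Nat.lt_succ_iff.mp i.isLt
  have hrε : r ≤ ε ^ (1 / (n : ℝ)) :=
    (Real.rpow_le_rpow (abs_nonneg _) hc (by positivity)).trans
      (Real.rpow_le_rpow_of_exponent_ge hε hε1 (one_div_le_one_div_of_le hipos hin))
  have hr1 : r ≤ 1 := hrε.trans (Real.rpow_le_one hε.le hε1 (by positivity))
  have hsplit : |c i| = r ^ k * r ^ ((i : ℕ) - k) := by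
    rw [← pow_add, Nat.add_sub_cancel' hki, hri]
  calc |c i| * t ^ ((i : ℕ) - k) = r ^ k * (r * t) ^ ((i : ℕ) - k) := by
        rw [hsplit, mul_pow, mul_assoc]
    _ ≤ r ^ k * 1 := by
        gcongr
        exact pow_le_one₀ (by positivity) (hr.trans hη1)
    _ ≤ r := by rw [mul_one]; exact pow_le_of_le_one hr0 hr1 (by omega)
    _ ≤ _ := hrε

theorem abs_sum_le_card_mul {m : ℕ} (s : Finset (Fin m)) {f : Fin m → ℝ} {M : ℝ} (hM : 0 ≤ M)
    (h : ∀ i ∈ s, |f i| ≤ M) : |∑ i ∈ s, f i| ≤ m * M := by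
  refine (Finset.abs_sum_le_sum_abs _ _).trans ((Finset.sum_le_card_nsmul _ _ _ h).trans ?_)
  rw [nsmul_eq_mul]
  gcongr
  simpa using s.card_le_univ

end SymRep

theorem sym_rep_divergence_estimate (n : ℕ) (hn : 1 ≤ n) :
    ∃ C : ℝ, 0 < C ∧ ∀ ε ∈ Set.Ioo (0 : ℝ) 1, ∀ η ∈ Set.Ioo (0 : ℝ) 1,
      ∀ c : Fin (n + 1) → ℝ, (∀ i, |c i| ≤ ε) →
      ∀ t : ℝ, 0 ≤ t → ENNReal.ofReal t ≤ SymRep.time η c →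
        -- the image vector has the coefficients estimated in (a) and (b)
        (SymRep.rep n (SymRep.u t) (SymRep.vec c) =
          SymRep.vec fun k => ∑ i ∈ Finset.Ici k,
            ((i : ℕ).choose k : ℝ) * c i * t ^ ((i : ℕ) - k)) ∧
        -- (a)
        (ε ≤ η → |∑ i, c i * t ^ (i : ℕ)| ≤ C * η) ∧
        -- (b)
        (∀ k : Fin (n + 1), 1 ≤ (k : ℕ) →
          |∑ i ∈ Finset.Ici k, ((i : ℕ).choose k : ℝ) * c i * t ^ ((i : ℕ) - k)| ≤
            C * ε ^ (1 / (n : ℝ))) ∧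
        -- (c)
        (∃ w e : SymRep.Sym n,
          SymRep.rep n (SymRep.u t) (SymRep.vec c) = w + e ∧
          w ∈ Submodule.span ℝ {SymRep.basisVec n 0} ∧
          (∀ s : ℝ, SymRep.rep n (SymRep.u s) w = w) ∧
          SymRep.symNorm w ≤ C * η ∧
          SymRep.symNorm e ≤ C * ε ^ (1 / (n : ℝ))) := by

  refine ⟨((n + 1 : ℕ) : ℝ) * 2 ^ n, by positivity, ?_⟩
  intro ε hε η hη c hc t ht hT
  obtain ⟨hε0, hε1⟩ := hε
  obtain ⟨hη0, hη1⟩ := hη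
  have hN : (1 : ℝ) ≤ ((n + 1 : ℕ) : ℝ) := by exact_mod_cast Nat.le_add_left 1 n
  have h2 : (1 : ℝ) ≤ 2 ^ n := one_le_pow₀ (by norm_num)
  have hn' : (1 : ℝ) ≤ n := by exact_mod_cast hn
  have hδ0 : 0 < ε ^ (1 / (n : ℝ)) := Real.rpow_pos_of_pos hε0 _
  have hεδ : ε ≤ ε ^ (1 / (n : ℝ)) := by
    conv_lhs => rw [← Real.rpow_one ε]
    exact Real.rpow_le_rpow_of_exponent_ge hε0 hε1.le ((div_le_one (by positivity)).mpr hn')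
  set δ := ε ^ (1 / (n : ℝ))
  have hC : ∀ x : ℝ, 0 ≤ x → ((n + 1 : ℕ) : ℝ) * x ≤ ((n + 1 : ℕ) : ℝ) * 2 ^ n * x := by
    intro x hx
    rw [mul_assoc]
    gcongr
    exact le_mul_of_one_le_left hx h2
  have hterm : ∀ i : Fin (n + 1), i ≠ 0 → |c i * t ^ (i : ℕ)| ≤ η := fun i hi => by
    rw [abs_mul, abs_of_nonneg (pow_nonneg ht _)]
    exact SymRep.abs_mul_pow_le hη0.le hη1.le ht hT hi
  have hb : ∀ k : Fin (n + 1), 1 ≤ (k : ℕ) →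
      |∑ i ∈ Finset.Ici k, ((i : ℕ).choose k : ℝ) * c i * t ^ ((i : ℕ) - k)| ≤
        ((n + 1 : ℕ) : ℝ) * 2 ^ n * δ := by
    intro k hk
    rw [mul_assoc]
    refine SymRep.abs_sum_le_card_mul _ (by positivity) fun i hi => ?_
    have hki : (k : ℕ) ≤ i := Fin.le_def.mp (Finset.mem_Ici.mp hi)
    have hch : ((i : ℕ).choose k : ℝ) ≤ 2 ^ n := by
      exact_mod_cast (Nat.choose_le_two_pow _ _).trans
        (Nat.pow_le_pow_right two_pos (Nat.lt_succ_iff.mp i.isLt))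
    rw [mul_assoc, abs_mul, abs_mul, Nat.abs_cast, abs_of_nonneg (pow_nonneg ht _)]
    exact mul_le_mul hch (SymRep.abs_mul_pow_sub_le hε0 hε1.le hη0.le hη1.le ht hT (hc i) hk hki)
      (by positivity) (by positivity)
  refine ⟨SymRep.rep_u_vec t c, fun hεη => ?_, hb, ?_⟩
  · refine (SymRep.abs_sum_le_card_mul _ hη0.le fun i _ => ?_).trans (hC η hη0.le)
    by_cases hi : i = 0
    · subst hi
      simpa using (hc 0).trans hεη
    · exact hterm i hi
  · set d : Fin (n + 1) → ℝ := fun k =>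
      ∑ i ∈ Finset.Ici k, ((i : ℕ).choose k : ℝ) * c i * t ^ ((i : ℕ) - k) with hd
    have hd0 : d 0 = c 0 + ∑ i ∈ Finset.univ.erase 0, c i * t ^ (i : ℕ) := by
      have hI : Finset.Ici (0 : Fin (n + 1)) = Finset.univ := by ext; simp
      simp only [hd, hI]
      rw [← Finset.add_sum_erase _ _ (Finset.mem_univ (0 : Fin (n + 1)))]
      simp
    set a : ℝ := ∑ i ∈ Finset.univ.erase (0 : Fin (n + 1)), c i * t ^ (i : ℕ)
    have ha : |a| ≤ ((n + 1 : ℕ) : ℝ) * 2 ^ n * η :=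
      (SymRep.abs_sum_le_card_mul _ hη0.le fun i hi =>
        hterm i (Finset.ne_of_mem_erase hi)).trans (hC η hη0.le)
    refine ⟨SymRep.vec (Pi.single 0 a), SymRep.vec (d - Pi.single 0 a), ?_, ?_, ?_, ?_, ?_⟩
    · rw [← SymRep.vec_add, add_sub_cancel]
      exact SymRep.rep_u_vec t c
    · rw [SymRep.vec_single_zero]
      exact Submodule.smul_mem _ _ (Submodule.mem_span_singleton_self _)
    · intro s
      rw [SymRep.vec_single_zero, map_smul, SymRep.rep_u_basisVec_zero]
    · refine SymRep.symNorm_vec_le fun i => ?_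
      by_cases hi : i = 0
      · subst hi
        simpa using ha
      · rw [Pi.single_eq_of_ne hi, abs_zero]
        positivity
    · refine SymRep.symNorm_vec_le fun i => ?_
      by_cases hi : i = 0
      · subst hi
        rw [Pi.sub_apply, Pi.single_eq_same, hd0, add_sub_cancel_right]
        exact ((hc 0).trans hεδ).trans ((le_mul_of_one_le_left hδ0.le hN).trans (hC δ hδ0.le))
      · rw [Pi.sub_apply, Pi.single_eq_of_ne hi, sub_zero]
        exact hb i (Nat.one_le_iff_ne_zero.mpr fun e => hi (Fin.ext e))
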